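/- Let w ∈ [1,γ] and k ∈ ℕ. Then γᵏ w γ⁻ᵏ ∈ [1,γ], and the following identities hold in Γ₊ (interpreting ⟨1⟩ as the identity of Γ₊): (a) ⟨γ⟩ = ⟨γ^{k+1} w⁻¹ γ^{-k}⟩⟨γᵏ w γ⁻ᵏ⟩; (b) ⟨γ⟩ = ⟨γ^{k+1} w γ^{-(k+1)}⟩⟨γ^{k+1} w⁻¹ γ^{-k}⟩; (c) ⟨γ⟩⟨γᵏ w γ⁻ᵏ⟩ = ⟨γ^{k+1} w γ^{-(k+1)}⟩⟨γ⟩. -/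

import Mathlib

/-!
Reflection length is invariant under conjugation, so for `w ≤ γ` both complements `w⁻¹γ` and `γw⁻¹`
lie in `[1,γ]`, and `γ = w · w⁻¹γ = γw⁻¹ · w` become relations of `Γ₊`. The left complement `γw⁻¹`
of `w` is the right complement of `γwγ⁻¹`, so `⟨γ⟩⟨w⟩ = ⟨γwγ⁻¹⟩⟨γw⁻¹⟩⟨w⟩ = ⟨γwγ⁻¹⟩⟨γ⟩`. Since
conjugation by a power of `γ` preserves `[1,γ]`, it is enough to apply this with `γᵏwγ⁻ᵏ` in place
of `w`.
-/

variable {B : Type*} {W : Type*} [Group W] {M : CoxeterMatrix B}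

/-- The reflection length of `w`: the least `k` such that `w` is a product of `k`
reflections (conjugates of simple reflections). -/
noncomputable def rlen (cs : CoxeterSystem M W) (w : W) : ℕ :=
  sInf {k | ∃ l : List W, (∀ t ∈ l, cs.IsReflection t) ∧ l.length = k ∧ l.prod = w}

/-- The reflection (absolute) order on `W`: `u ≤ w` iff `ℓ(w) = ℓ(u) + ℓ(u⁻¹w)`. -/
def rle (cs : CoxeterSystem M W) (u w : W) : Prop :=
  rlen cs w = rlen cs u + rlen cs (u⁻¹ * w)

/-- A Coxeter element: a conjugate of a product of all the simple reflections,
each occurring exactly once, in some order. -/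
def IsCoxeterElement [Fintype B] (cs : CoxeterSystem M W) (γ : W) : Prop :=
  ∃ (v : W) (l : List B), l.Nodup ∧ (∀ i : B, i ∈ l) ∧ γ = v * cs.wordProd l * v⁻¹

/-- The generating set of the poset group/monoid: the interval `[1,γ]` minus the identity. -/
abbrev NCGen (cs : CoxeterSystem M W) (γ : W) : Type _ :=
  {w : W // w ≠ 1 ∧ rle cs w γ}

/-- The defining relations of the positive monoid `Γ₊(W,γ)`:
`⟨w₁⟩⟨w₂⟩ = ⟨w₃⟩` whenever `w₁w₂ = w₃` in `W` and `ℓ(w₁) + ℓ(w₂) = ℓ(w₃)`. -/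
def posRels (cs : CoxeterSystem M W) (γ : W) :
    FreeMonoid (NCGen cs γ) → FreeMonoid (NCGen cs γ) → Prop :=
  fun x y => ∃ w₁ w₂ w₃ : NCGen cs γ,
    x = FreeMonoid.of w₁ * FreeMonoid.of w₂ ∧ y = FreeMonoid.of w₃ ∧
    (w₁ : W) * (w₂ : W) = (w₃ : W) ∧
    rlen cs (w₁ : W) + rlen cs (w₂ : W) = rlen cs (w₃ : W)

/-- The positive monoid `Γ₊(W,γ)`, presented by the generators `⟨w⟩`, `w ∈ [1,γ] \ {1}`,
and the relations `posRels`. -/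
abbrev PosMonoid (cs : CoxeterSystem M W) (γ : W) := PresentedMonoid (posRels cs γ)

open Classical in
/-- The generator `⟨w⟩` of `Γ₊(W,γ)` for `w ∈ [1,γ]`, interpreting `⟨1⟩` as the
identity of the monoid (and defaulting to the identity off the interval). -/
noncomputable def pgen (cs : CoxeterSystem M W) (γ : W) (w : W) : PosMonoid cs γ :=
  if h : w ≠ 1 ∧ rle cs w γ then PresentedMonoid.of (posRels cs γ) ⟨w, h⟩ else 1

section ReflectionLength

variable (cs : CoxeterSystem M W)

lemma rlen_prod_le_length {l : List W} (hl : ∀ t ∈ l, cs.IsReflection t) :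
    rlen cs l.prod ≤ l.length :=
  Nat.sInf_le ⟨l, hl, rfl, rfl⟩

lemma exists_reflections_length_eq_rlen (w : W) :
    ∃ l : List W, (∀ t ∈ l, cs.IsReflection t) ∧ l.length = rlen cs w ∧ l.prod = w := by
  obtain ⟨ω, rfl⟩ := cs.wordProd_surjective w
  have simple_reflections : ∀ t ∈ ω.map cs.simple, cs.IsReflection t :=
    List.forall_mem_map.2 fun i _ => cs.isReflection_simple i
  have nonempty_lengths : {k | ∃ l : List W, (∀ t ∈ l, cs.IsReflection t) ∧ l.length = k ∧
      l.prod = cs.wordProd ω}.Nonempty :=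
    ⟨_, ω.map cs.simple, simple_reflections, rfl, rfl⟩
  exact Nat.sInf_mem nonempty_lengths

@[simp]
lemma rlen_eq_zero_iff {w : W} : rlen cs w = 0 ↔ w = 1 := by
  constructor
  · intro h
    obtain ⟨l, -, hlen, rfl⟩ := exists_reflections_length_eq_rlen cs w
    rw [List.length_eq_zero_iff.1 (hlen.trans h), List.prod_nil]
  · rintro rfl
    exact Nat.le_zero.1 (rlen_prod_le_length cs (l := []) (by simp))

lemma rlen_conj_le (g w : W) : rlen cs (g * w * g⁻¹) ≤ rlen cs w := by
  obtain ⟨l, hl, hlen, rfl⟩ := exists_reflections_length_eq_rlen cs w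
  have conj_reflections : ∀ t ∈ l.map (MulAut.conj g), cs.IsReflection t :=
    List.forall_mem_map.2 fun t ht => (hl t ht).conj g
  calc rlen cs (g * l.prod * g⁻¹)
      = rlen cs (l.map (MulAut.conj g)).prod := by rw [← map_list_prod, MulAut.conj_apply]
    _ ≤ (l.map (MulAut.conj g)).length := rlen_prod_le_length cs conj_reflections
    _ = rlen cs l.prod := by rw [List.length_map, hlen]

@[simp]
lemma rlen_conj (g w : W) : rlen cs (g * w * g⁻¹) = rlen cs w := by
  refine (rlen_conj_le cs g w).antisymm ?_
  simpa [mul_assoc] using rlen_conj_le cs g⁻¹ (g * w * g⁻¹)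

lemma rlen_mul_comm (u v : W) : rlen cs (u * v) = rlen cs (v * u) := by
  simpa [mul_assoc] using rlen_conj cs u (v * u)

end ReflectionLength

section ReflectionOrder

variable {cs : CoxeterSystem M W} {u v γ : W}

lemma rle_refl (cs : CoxeterSystem M W) (w : W) : rle cs w w := by
  simp [rle]

lemma eq_one_of_rle_one (h : rle cs u 1) : u = 1 := by
  have lengths_zero : rlen cs u + rlen cs (u⁻¹ * 1) = 0 := h.symm.trans (by simp)
  exact (rlen_eq_zero_iff cs).1 (Nat.add_eq_zero_iff.1 lengths_zero).1

lemma rle_mul_right_iff : rle cs u (u * v) ↔ rlen cs (u * v) = rlen cs u + rlen cs v := by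
  rw [rle, inv_mul_cancel_left]

lemma rle_inv_mul (h : rle cs u γ) : rle cs (u⁻¹ * γ) γ := by
  have conj_complement : rlen cs ((u⁻¹ * γ)⁻¹ * γ) = rlen cs u := by
    rw [rlen_mul_comm, mul_inv_rev, inv_inv, mul_inv_cancel_left]
  rw [rle, conj_complement, add_comm]
  exact h

lemma rle_mul_inv (h : rle cs u γ) : rle cs (γ * u⁻¹) γ := by
  rw [rle, rlen_mul_comm, mul_inv_rev, inv_inv, inv_mul_cancel_right, add_comm]
  exact h

@[simp]
lemma rle_conj_iff (g : W) : rle cs (g * u * g⁻¹) (g * v * g⁻¹) ↔ rle cs u v := by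
  have conj_complement : (g * u * g⁻¹)⁻¹ * (g * v * g⁻¹) = g * (u⁻¹ * v) * g⁻¹ := by group
  rw [rle, conj_complement, rlen_conj, rlen_conj, rlen_conj, rle]

lemma rle_conj_of_commute (h : rle cs u γ) {g : W} (hg : Commute g γ) :
    rle cs (g * u * g⁻¹) γ := by
  simpa only [hg.eq, mul_inv_cancel_right] using (rle_conj_iff g).2 h

end ReflectionOrder

section PositiveMonoid

variable {cs : CoxeterSystem M W} {u v w γ : W}

@[simp]
lemma pgen_one (cs : CoxeterSystem M W) (γ : W) : pgen cs γ 1 = 1 :=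
  dif_neg fun h => h.1 rfl

lemma pgen_of_ne_one (hw1 : w ≠ 1) (hw : rle cs w γ) :
    pgen cs γ w = PresentedMonoid.of (posRels cs γ) ⟨w, hw1, hw⟩ :=
  dif_pos ⟨hw1, hw⟩

lemma pgen_mul (hu : rle cs u γ) (hv : rle cs v γ) (huv : rle cs (u * v) γ)
    (hadd : rle cs u (u * v)) : pgen cs γ (u * v) = pgen cs γ u * pgen cs γ v := by
  by_cases hu1 : u = 1
  · simp [hu1]
  by_cases hv1 : v = 1
  · simp [hv1]
  have huv1 : u * v ≠ 1 := fun h => hu1 (eq_one_of_rle_one (h ▸ hadd))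
  rw [pgen_of_ne_one hu1 hu, pgen_of_ne_one hv1 hv, pgen_of_ne_one huv1 huv]
  exact (PresentedMonoid.mk_eq_mk_of_rel ⟨⟨u, hu1, hu⟩, ⟨v, hv1, hv⟩, ⟨u * v, huv1, huv⟩,
    rfl, rfl, rfl, (rle_mul_right_iff.1 hadd).symm⟩).symm

lemma pgen_self_eq_mul_inv_mul (h : rle cs w γ) :
    pgen cs γ γ = pgen cs γ w * pgen cs γ (w⁻¹ * γ) := by
  have factorization : w * (w⁻¹ * γ) = γ := mul_inv_cancel_left w γ
  calc pgen cs γ γ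
      = pgen cs γ (w * (w⁻¹ * γ)) := by rw [factorization]
    _ = pgen cs γ w * pgen cs γ (w⁻¹ * γ) :=
      pgen_mul h (rle_inv_mul h) (factorization.symm ▸ rle_refl cs γ) (factorization.symm ▸ h)

lemma pgen_self_eq_mul_inv (h : rle cs w γ) :
    pgen cs γ γ = pgen cs γ (γ * w⁻¹) * pgen cs γ w := by
  simpa using pgen_self_eq_mul_inv_mul (rle_mul_inv h)

lemma pgen_self_eq_conj_mul (h : rle cs w γ) :
    pgen cs γ γ = pgen cs γ (γ * w * γ⁻¹) * pgen cs γ (γ * w⁻¹) := by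
  simpa [mul_assoc] using pgen_self_eq_mul_inv_mul (rle_conj_of_commute h (Commute.refl γ))

lemma pgen_self_mul (h : rle cs w γ) :
    pgen cs γ γ * pgen cs γ w = pgen cs γ (γ * w * γ⁻¹) * pgen cs γ γ :=
  calc pgen cs γ γ * pgen cs γ w
      = pgen cs γ (γ * w * γ⁻¹) * (pgen cs γ (γ * w⁻¹) * pgen cs γ w) := by
        rw [pgen_self_eq_conj_mul h, mul_assoc]
    _ = pgen cs γ (γ * w * γ⁻¹) * pgen cs γ γ := by rw [← pgen_self_eq_mul_inv h]

end PositiveMonoid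

theorem gamma_power_identities_general (cs : CoxeterSystem M W) (γ w : W) (hw : rle cs w γ)
    (k : ℤ) :
    rle cs (γ ^ k * w * (γ ^ k)⁻¹) γ ∧
    pgen cs γ γ =
      pgen cs γ (γ ^ (k + 1) * w⁻¹ * (γ ^ k)⁻¹) * pgen cs γ (γ ^ k * w * (γ ^ k)⁻¹) ∧
    pgen cs γ γ =
      pgen cs γ (γ ^ (k + 1) * w * (γ ^ (k + 1))⁻¹) *
        pgen cs γ (γ ^ (k + 1) * w⁻¹ * (γ ^ k)⁻¹) ∧
    pgen cs γ γ * pgen cs γ (γ ^ k * w * (γ ^ k)⁻¹) =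
      pgen cs γ (γ ^ (k + 1) * w * (γ ^ (k + 1))⁻¹) * pgen cs γ γ := by
  have complement_eq : γ ^ (k + 1) * w⁻¹ * (γ ^ k)⁻¹ = γ * (γ ^ k * w * (γ ^ k)⁻¹)⁻¹ := by
    group
  have conj_eq : γ ^ (k + 1) * w * (γ ^ (k + 1))⁻¹ = γ * (γ ^ k * w * (γ ^ k)⁻¹) * γ⁻¹ := by
    group
  have conj_le : rle cs (γ ^ k * w * (γ ^ k)⁻¹) γ :=
    rle_conj_of_commute hw ((Commute.refl γ).zpow_left k)
  rw [complement_eq, conj_eq]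
  exact ⟨conj_le, pgen_self_eq_mul_inv conj_le, pgen_self_eq_conj_mul conj_le,
    pgen_self_mul conj_le⟩

/-- Brady's Corollary 5.3: for `w ∈ [1,γ]` and `k ∈ ℕ`, `γᵏwγ⁻ᵏ ∈ [1,γ]` and the
identities (a) `⟨γ⟩ = ⟨γ^{k+1}w⁻¹γ^{-k}⟩⟨γᵏwγ⁻ᵏ⟩`,
(b) `⟨γ⟩ = ⟨γ^{k+1}wγ^{-(k+1)}⟩⟨γ^{k+1}w⁻¹γ^{-k}⟩`,
(c) `⟨γ⟩⟨γᵏwγ⁻ᵏ⟩ = ⟨γ^{k+1}wγ^{-(k+1)}⟩⟨γ⟩` hold in `Γ₊` (with `⟨1⟩` the identity). -/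
theorem gamma_power_identities [Fintype B] [Fintype W] (cs : CoxeterSystem M W) (γ : W)
    (hγ : IsCoxeterElement cs γ) (w : W) (hw : rle cs w γ) (k : ℕ) :
    rle cs (γ ^ k * w * (γ ^ k)⁻¹) γ ∧
    pgen cs γ γ =
      pgen cs γ (γ ^ (k + 1) * w⁻¹ * (γ ^ k)⁻¹) * pgen cs γ (γ ^ k * w * (γ ^ k)⁻¹) ∧
    pgen cs γ γ =
      pgen cs γ (γ ^ (k + 1) * w * (γ ^ (k + 1))⁻¹) *
        pgen cs γ (γ ^ (k + 1) * w⁻¹ * (γ ^ k)⁻¹) ∧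
    pgen cs γ γ * pgen cs γ (γ ^ k * w * (γ ^ k)⁻¹) =
      pgen cs γ (γ ^ (k + 1) * w * (γ ^ (k + 1))⁻¹) * pgen cs γ γ := by
  exact_mod_cast gamma_power_identities_general cs γ w hw k
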